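/- The symmetric part g of τ is parallel with respect to the generalized Levi-Civita connection of τ: for all indices μ, α, β and all x ∈ U, ∂_μ g_{αβ} − Σ_δ Γ^δ_{μα} g_{δβ} − Σ_δ Γ^δ_{μβ} g_{αδ} = 0. Equivalently, the covariant derivative of τ with respect to Γ equals the covariant derivative of its antisymmetric part ω: ∂_μ τ_{αν} − Σ_β Γ^β_{μα} τ_{βν} − Σ_β Γ^β_{μν} τ_{αβ} = ∂_μ ω_{αν} − Σ_β Γ^β_{μα} ω_{βν} − Σ_β Γ^β_{μν} ω_{αβ} for all indices μ, α, ν. -/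

import Mathlib

open scoped BigOperators

/-- The partial derivative `∂_μ f` of `f : ℝⁿ → ℝ` in the `μ`-th coordinate direction. -/
noncomputable def pd {n : ℕ} (μ : Fin n) (f : (Fin n → ℝ) → ℝ) (x : Fin n → ℝ) : ℝ :=
  fderiv ℝ f x (Pi.single μ 1)

/-- The symmetric part `g_{μν} = (τ_{μν} + τ_{νμ})/2` of `τ`. -/
noncomputable def gPart {n : ℕ} (τ : (Fin n → ℝ) → Matrix (Fin n) (Fin n) ℝ)
    (x : Fin n → ℝ) : Matrix (Fin n) (Fin n) ℝ :=
  fun μ ν => (τ x μ ν + τ x ν μ) / 2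

/-- The antisymmetric part `ω_{μν} = (τ_{μν} - τ_{νμ})/2` of `τ`. -/
noncomputable def wPart {n : ℕ} (τ : (Fin n → ℝ) → Matrix (Fin n) (Fin n) ℝ)
    (x : Fin n → ℝ) : Matrix (Fin n) (Fin n) ℝ :=
  fun μ ν => (τ x μ ν - τ x ν μ) / 2

/-- The entries `g^{μν}` of the inverse matrix `g(x)⁻¹`. -/
noncomputable def gInv {n : ℕ} (τ : (Fin n → ℝ) → Matrix (Fin n) (Fin n) ℝ)
    (x : Fin n → ℝ) : Matrix (Fin n) (Fin n) ℝ :=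
  (gPart τ x)⁻¹

/-- The generalized Christoffel symbols
`Γ^α_{μβ} = (1/2) Σ_δ g^{αδ} (∂_μ τ_{βδ} + ∂_β τ_{δμ} − ∂_δ τ_{βμ})` of `τ`. -/
noncomputable def GammaT {n : ℕ} (τ : (Fin n → ℝ) → Matrix (Fin n) (Fin n) ℝ)
    (α μ β : Fin n) (x : Fin n → ℝ) : ℝ :=
  (1 / 2) * ∑ δ, gInv τ x α δ *
    (pd μ (fun y => τ y β δ) x + pd β (fun y => τ y δ μ) x - pd δ (fun y => τ y β μ) x)

/-- The classical Christoffel symbols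
`Γg^α_{μβ} = (1/2) Σ_δ g^{αδ} (∂_μ g_{βδ} + ∂_β g_{δμ} − ∂_δ g_{βμ})`
of the symmetric part `g` of `τ`. -/
noncomputable def GammaG {n : ℕ} (τ : (Fin n → ℝ) → Matrix (Fin n) (Fin n) ℝ)
    (α μ β : Fin n) (x : Fin n → ℝ) : ℝ :=
  (1 / 2) * ∑ δ, gInv τ x α δ *
    (pd μ (fun y => gPart τ y β δ) x + pd β (fun y => gPart τ y δ μ) x -
      pd δ (fun y => gPart τ y β μ) x)

/-!
Contracting `Γ^δ_{μα}` with `g_{δβ}` cancels the inverse metric and leaves the symbol of the first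
kind `Γ_{βμα} = (∂_μ τ_{αβ} + ∂_α τ_{βμ} - ∂_β τ_{αμ}) / 2`. In `Γ_{βμα} + Γ_{αμβ}` the derivatives
in the directions `α` and `β` cancel and the rest is `∂_μ g_{αβ}`, so `∇g = 0`. Since `τ = g + ω`
and `∇` is additive, `∇τ = ∇ω`.
-/

section SymmetricMatrix

open Matrix

theorem inv_mulVec_vecMul_of_isSymm {ι R : Type*} [Fintype ι] [DecidableEq ι] [CommRing R]
    {A : Matrix ι ι R} (hA : A.IsSymm) (hdet : IsUnit A.det) (v : ι → R) :
    (A⁻¹ *ᵥ v) ᵥ* A = v := by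
  rw [← mulVec_transpose, hA.eq, mulVec_mulVec, mul_nonsing_inv A hdet, one_mulVec]

end SymmetricMatrix

section CovariantDerivative

variable {n : ℕ} {x : Fin n → ℝ}

theorem pd_add {f h : (Fin n → ℝ) → ℝ} (hf : DifferentiableAt ℝ f x)
    (hh : DifferentiableAt ℝ h x) (μ : Fin n) :
    pd μ (fun y => f y + h y) x = pd μ f x + pd μ h x := by
  simp only [pd, fderiv_fun_add hf hh, _root_.add_apply]

theorem pd_div_const {f : (Fin n → ℝ) → ℝ} (hf : DifferentiableAt ℝ f x) (c : ℝ) (μ : Fin n) :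
    pd μ (fun y => f y / c) x = pd μ f x / c := by
  simp only [pd, div_eq_inv_mul, fderiv_const_mul hf, _root_.smul_apply, smul_eq_mul]

/-- The covariant derivative `∇_μ T_{αβ} = ∂_μ T_{αβ} - Σ_δ Γ^δ_{μα} T_{δβ} - Σ_δ Γ^δ_{μβ} T_{αδ}`
of a field `T` of bilinear forms, for the connection with coefficients `Γ δ μ α = Γ^δ_{μα}`. -/
noncomputable def covDeriv (Γ : Fin n → Fin n → Fin n → (Fin n → ℝ) → ℝ)
    (T : (Fin n → ℝ) → Matrix (Fin n) (Fin n) ℝ) (μ α β : Fin n) (x : Fin n → ℝ) : ℝ :=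
  pd μ (fun y => T y α β) x - (∑ δ, Γ δ μ α x * T x δ β) - (∑ δ, Γ δ μ β x * T x α δ)

theorem covDeriv_add (Γ : Fin n → Fin n → Fin n → (Fin n → ℝ) → ℝ)
    {S T : (Fin n → ℝ) → Matrix (Fin n) (Fin n) ℝ} {α β : Fin n}
    (hS : DifferentiableAt ℝ (fun y => S y α β) x)
    (hT : DifferentiableAt ℝ (fun y => T y α β) x) (μ : Fin n) :
    covDeriv Γ (S + T) μ α β x = covDeriv Γ S μ α β x + covDeriv Γ T μ α β x := by
  simp only [covDeriv, Pi.add_apply, Matrix.add_apply, pd_add hS hT, mul_add,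
    Finset.sum_add_distrib]
  ring

end CovariantDerivative

section LeviCivita

open Matrix

variable {n : ℕ} {τ : (Fin n → ℝ) → Matrix (Fin n) (Fin n) ℝ} {x : Fin n → ℝ}

theorem isSymm_gPart (τ : (Fin n → ℝ) → Matrix (Fin n) (Fin n) ℝ) (x : Fin n → ℝ) :
    (gPart τ x).IsSymm :=
  IsSymm.ext fun μ ν => by simp only [gPart, add_comm]

theorem gPart_add_wPart (τ : (Fin n → ℝ) → Matrix (Fin n) (Fin n) ℝ) :
    gPart τ + wPart τ = τ := by
  ext y μ ν
  simp only [gPart, wPart, Pi.add_apply, Matrix.add_apply]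
  ring

theorem covDeriv_eq_gPart_add_wPart (Γ : Fin n → Fin n → Fin n → (Fin n → ℝ) → ℝ)
    {α β : Fin n} (hαβ : DifferentiableAt ℝ (fun y => τ y α β) x)
    (hβα : DifferentiableAt ℝ (fun y => τ y β α) x) (μ : Fin n) :
    covDeriv Γ τ μ α β x = covDeriv Γ (gPart τ) μ α β x + covDeriv Γ (wPart τ) μ α β x := by
  have hg : DifferentiableAt ℝ (fun y => gPart τ y α β) x := by
    simpa only [gPart, div_eq_inv_mul] using (hαβ.fun_add hβα).const_mul 2⁻¹
  have hw : DifferentiableAt ℝ (fun y => wPart τ y α β) x := by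
    simpa only [wPart, div_eq_inv_mul] using (hαβ.fun_sub hβα).const_mul 2⁻¹
  rw [← covDeriv_add Γ hg hw, gPart_add_wPart]

/-- The generalized Christoffel symbols of the first kind `Γ_{δμβ}`, that is, the
symbols `Γ^α_{μβ}` with the upper index lowered by `g` and placed first. -/
noncomputable def christoffelFirst (τ : (Fin n → ℝ) → Matrix (Fin n) (Fin n) ℝ)
    (δ μ β : Fin n) (x : Fin n → ℝ) : ℝ :=
  (1 / 2) *
    (pd μ (fun y => τ y β δ) x + pd β (fun y => τ y δ μ) x - pd δ (fun y => τ y β μ) x)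

theorem GammaT_eq_gInv_mulVec_christoffelFirst (τ : (Fin n → ℝ) → Matrix (Fin n) (Fin n) ℝ)
    (α μ β : Fin n) (x : Fin n → ℝ) :
    GammaT τ α μ β x = (gInv τ x *ᵥ fun δ => christoffelFirst τ δ μ β x) α := by
  simp only [GammaT, mulVec, dotProduct, christoffelFirst, Finset.mul_sum, mul_left_comm]

theorem sum_GammaT_mul_gPart (hg : IsUnit (gPart τ x).det) (μ α β : Fin n) :
    ∑ δ, GammaT τ δ μ α x * gPart τ x δ β = christoffelFirst τ β μ α x := by
  simp only [GammaT_eq_gInv_mulVec_christoffelFirst]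
  exact congrFun (inv_mulVec_vecMul_of_isSymm (isSymm_gPart τ x) hg _) β

theorem christoffelFirst_add_christoffelFirst {α β : Fin n}
    (hαβ : DifferentiableAt ℝ (fun y => τ y α β) x)
    (hβα : DifferentiableAt ℝ (fun y => τ y β α) x) (μ : Fin n) :
    christoffelFirst τ β μ α x + christoffelFirst τ α μ β x =
      pd μ (fun y => gPart τ y α β) x := by
  simp only [christoffelFirst, gPart, pd_div_const (hαβ.fun_add hβα), pd_add hαβ hβα]
  ring

theorem covDeriv_GammaT_gPart {α β : Fin n}
    (hαβ : DifferentiableAt ℝ (fun y => τ y α β) x)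
    (hβα : DifferentiableAt ℝ (fun y => τ y β α) x)
    (hg : IsUnit (gPart τ x).det) (μ : Fin n) :
    covDeriv (GammaT τ) (gPart τ) μ α β x = 0 := by
  have hlower : ∑ δ, GammaT τ δ μ β x * gPart τ x α δ = christoffelFirst τ α μ β x := by
    simp only [(isSymm_gPart τ x).apply _ α, sum_GammaT_mul_gPart hg]
  rw [covDeriv, sum_GammaT_mul_gPart hg, hlower, ← christoffelFirst_add_christoffelFirst hαβ hβα]
  ring

end LeviCivita

theorem statement7_general {n : ℕ} {τ : (Fin n → ℝ) → Matrix (Fin n) (Fin n) ℝ}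
    {x : Fin n → ℝ} {α β : Fin n} (hαβ : DifferentiableAt ℝ (fun y => τ y α β) x)
    (hβα : DifferentiableAt ℝ (fun y => τ y β α) x) (hg : IsUnit (gPart τ x).det) (μ : Fin n) :
    covDeriv (GammaT τ) (gPart τ) μ α β x = 0 ∧
      covDeriv (GammaT τ) τ μ α β x = covDeriv (GammaT τ) (wPart τ) μ α β x := by
  have hparallel := covDeriv_GammaT_gPart hαβ hβα hg μ
  exact ⟨hparallel, by rw [covDeriv_eq_gPart_add_wPart _ hαβ hβα, hparallel, zero_add]⟩

/-- The symmetric part `g` of `τ` is parallel for the generalized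
Levi-Civita connection of `τ`:
`∂_μ g_{αβ} − Σ_δ Γ^δ_{μα} g_{δβ} − Σ_δ Γ^δ_{μβ} g_{αδ} = 0`.
Equivalently, the covariant derivative of `τ` with respect to `Γ` equals the covariant
derivative of its antisymmetric part `ω`. -/
theorem statement7 (n : ℕ) (hn : 1 ≤ n) (U : Set (Fin n → ℝ)) (hU : IsOpen U)
    (τ : (Fin n → ℝ) → Matrix (Fin n) (Fin n) ℝ)
    (hτ : ∀ μ ν : Fin n, ContDiffOn ℝ (⊤ : ℕ∞) (fun x => τ x μ ν) U)
    (hg : ∀ x ∈ U, IsUnit (gPart τ x).det) :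
    (∀ (μ α β : Fin n), ∀ x ∈ U,
      pd μ (fun y => gPart τ y α β) x -
        (∑ δ, GammaT τ δ μ α x * gPart τ x δ β) -
        (∑ δ, GammaT τ δ μ β x * gPart τ x α δ) = 0) ∧
    (∀ (μ α ν : Fin n), ∀ x ∈ U,
      pd μ (fun y => τ y α ν) x -
          (∑ β, GammaT τ β μ α x * τ x β ν) -
          (∑ β, GammaT τ β μ ν x * τ x α β) =
        pd μ (fun y => wPart τ y α ν) x -
          (∑ β, GammaT τ β μ α x * wPart τ x β ν) -
          (∑ β, GammaT τ β μ ν x * wPart τ x α β)) := by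
  have hd : ∀ x ∈ U, ∀ μ ν, DifferentiableAt ℝ (fun y => τ y μ ν) x := fun x hx μ ν =>
    ((hτ μ ν).contDiffAt (hU.mem_nhds hx)).differentiableAt (by simp)
  exact ⟨fun μ α β x hx => (statement7_general (hd x hx α β) (hd x hx β α) (hg x hx) μ).1,
    fun μ α ν x hx => (statement7_general (hd x hx α ν) (hd x hx ν α) (hg x hx) μ).2⟩
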